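/- arXiv:2507.19998 — 2 statements merged into one kernel-verified Lean document; each statement's English description precedes it below -/
import Mathlib

section
/- Let a > −1 and let φ ∈ 𝒮⁺. Then for every t ≠ 0 one has ∫₀^∞ |S_a(t)φ(x)|² x^a dx = ∫₀^∞ |φ(x)|² x^a dx, i.e., the operator S_a(t) is an isometry of L²_a. -/
open MeasureTheory Filter Set

noncomputable def besselJ (ν : ℂ) (z : ℝ) : ℂ :=
  ∑' k : ℕ, ((-1 : ℂ) ^ k / (Complex.Gamma (k + 1) * Complex.Gamma (ν + k + 1))) *
    ((z : ℂ) / 2) ^ (2 * (k : ℂ) + ν)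

noncomputable def DIter : ℕ → (ℝ → ℂ) → (ℝ → ℂ)
  | 0, φ => φ
  | k + 1, φ => fun x => (1 / (x : ℂ)) * deriv (DIter k φ) x

def SPlus (φ : ℝ → ℂ) : Prop :=
  ContDiffOn ℝ (⊤ : ℕ∞) φ (Ioi 0) ∧
  ∀ m k : ℕ, ∃ C : ℝ, ∀ x > (0:ℝ), ‖(x : ℂ) ^ m * DIter k φ x‖ ≤ C

noncomputable def Skernel (a x y t : ℝ) : ℂ :=
  if 0 < t then
    Complex.exp (-(Complex.I) * (((a + 1) * Real.pi / 4 : ℝ) : ℂ)) *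
      (((2 * |t|) ^ (-(a + 1) / 2) : ℝ) : ℂ) *
      (((x * y / (2 * |t|)) ^ ((1 - a) / 2) : ℝ) : ℂ) *
      besselJ (((a - 1) / 2 : ℝ) : ℂ) (x * y / (2 * |t|)) *
      Complex.exp (Complex.I * ((((x ^ 2 + y ^ 2) / (4 * |t|)) : ℝ) : ℂ))
  else
    Complex.exp ((Complex.I) * (((a + 1) * Real.pi / 4 : ℝ) : ℂ)) *
      (((2 * |t|) ^ (-(a + 1) / 2) : ℝ) : ℂ) *
      (((x * y / (2 * |t|)) ^ ((1 - a) / 2) : ℝ) : ℂ) *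
      besselJ (((a - 1) / 2 : ℝ) : ℂ) (x * y / (2 * |t|)) *
      Complex.exp (-(Complex.I) * ((((x ^ 2 + y ^ 2) / (4 * |t|)) : ℝ) : ℂ))

noncomputable def Sop (a t : ℝ) (φ : ℝ → ℂ) (x : ℝ) : ℂ :=
  ∫ y in Ioi (0:ℝ), Skernel a x y t * φ y * ((y ^ a : ℝ) : ℂ)

/-!
The kernel of `S_a(t)` is that of the Hankel transform of frequency scale `1 / (2|t|)`, multiplied
by unimodular functions of `x` alone and of `y` alone, so the claim is the Plancherel identity for
the Hankel transform on `L²_a`. Integrating the Bessel series term by term shows that the Hankel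
transform sends Gaussians to multiples of Gaussians and, applied twice, fixes each of them; being
symmetric, it therefore preserves the Gram matrix of the Gaussians `e ^ (-(k + 1) y ^ 2)`. By
Weierstrass' theorem in the variable `e ^ (-y ^ 2)` these are total, so some isometry of `L²_a` acts
on them as the transform. If `f ∈ L²_a` and `(1 + y) f ∈ L¹_a`, then by symmetry the image of `f`
under this isometry and the Hankel integral of `f` have the same pairings with all these Gaussians,
so they agree; the weight `1 + y` absorbs the growth of the kernel, which is bounded by an energy
estimate for Bessel's equation.
-/

section BesselSeries

/-- The coefficient `1 / (k! Γ(κ + k))` of the Bessel series. -/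
noncomputable def besselCoeff (κ : ℝ) (k : ℕ) : ℝ :=
  (k.factorial * Real.Gamma (κ + k))⁻¹

/-- The entire function underlying the Bessel function of order `κ - 1`:
`J_ν(z) = (z / 2) ^ ν * besselSeries (ν + 1) ((z / 2) ^ 2)`. -/
noncomputable def besselSeries (κ w : ℝ) : ℝ :=
  ∑' k : ℕ, besselCoeff κ k * (-w) ^ k

variable {κ : ℝ}

theorem Gamma_add_nat_pos (hκ : 0 < κ) (k : ℕ) : 0 < Real.Gamma (κ + k) :=
  Real.Gamma_pos_of_pos (by positivity)

theorem besselCoeff_pos (hκ : 0 < κ) (k : ℕ) : 0 < besselCoeff κ k := by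
  have := Gamma_add_nat_pos hκ k
  unfold besselCoeff
  positivity

theorem succ_mul_besselCoeff_succ (κ : ℝ) (k : ℕ) :
    (k + 1) * besselCoeff κ (k + 1) = besselCoeff (κ + 1) k := by
  have : (k : ℝ) + 1 ≠ 0 := by positivity
  rw [besselCoeff, besselCoeff, Nat.factorial_succ]
  push_cast
  rw [mul_assoc, mul_inv, mul_inv_cancel_left₀ this, add_assoc, add_comm 1 (k : ℝ)]

theorem add_mul_besselCoeff_add_one (hκ : 0 < κ) (k : ℕ) :
    (κ + k) * besselCoeff (κ + 1) k = besselCoeff κ k := by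
  have hpos : κ + k ≠ 0 := by positivity
  rw [besselCoeff, besselCoeff, add_right_comm, Real.Gamma_add_one hpos, mul_left_comm, mul_inv,
    mul_inv_cancel_left₀ hpos]

theorem summable_besselCoeff_mul_pow (hκ : 0 < κ) (w : ℝ) :
    Summable fun k ↦ besselCoeff κ k * w ^ k := by
  refine summable_of_ratio_norm_eventually_le one_half_lt_one ?_
  filter_upwards [eventually_ge_atTop (max 1 ⌈2 * |w|⌉₊)] with k hk
  have hk1 : (1 : ℝ) ≤ k := mod_cast (le_max_left _ _).trans hk
  have hkw : 2 * |w| ≤ k := (Nat.le_ceil _).trans (mod_cast (le_max_right _ _).trans hk)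
  have hrec : besselCoeff κ k = (κ + k) * ((k + 1) * besselCoeff κ (k + 1)) := by
    rw [succ_mul_besselCoeff_succ, add_mul_besselCoeff_add_one hκ]
  have hc := besselCoeff_pos hκ (k + 1)
  rw [hrec]
  simp only [norm_mul, norm_pow, Real.norm_eq_abs, pow_succ, abs_of_pos hc,
    abs_of_pos (show 0 < κ + k by positivity), abs_of_pos (show (0 : ℝ) < k + 1 by positivity)]
  have hfactor : |w| ≤ 1 / 2 * ((κ + k) * (k + 1)) := by nlinarith
  calc besselCoeff κ (k + 1) * (|w| ^ k * |w|)
      ≤ besselCoeff κ (k + 1) * (|w| ^ k * (1 / 2 * ((κ + k) * (k + 1)))) := by gcongr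
    _ = _ := by ring

theorem hasDerivAt_besselSeries (hκ : 0 < κ) (w : ℝ) :
    HasDerivAt (besselSeries κ) (-besselSeries (κ + 1) w) w := by
  let term' (k : ℕ) (y : ℝ) : ℝ := besselCoeff κ k * (k * (-y) ^ (k - 1) * -1)
  have hterm' (k : ℕ) (y : ℝ) : term' (k + 1) y = -(besselCoeff (κ + 1) k * (-y) ^ k) := by
    simp only [term', ← succ_mul_besselCoeff_succ, Nat.add_sub_cancel]
    push_cast
    ring
  let R := |w| + 1
  have hw : w ∈ Metric.ball (0 : ℝ) R := by simp [R]
  have hsum : Summable fun k ↦ |term' k (-R)| := by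
    rw [← summable_nat_add_iff 1]
    simp only [hterm', abs_neg, neg_neg]
    exact (summable_besselCoeff_mul_pow (by positivity) R).abs
  have hbound (k : ℕ) (y : ℝ) (hy : y ∈ Metric.ball (0 : ℝ) R) :
      ‖term' k y‖ ≤ |term' k (-R)| := by
    have hyR : |y| ≤ |R| := (mem_ball_zero_iff.1 hy).le.trans (le_abs_self R)
    simp only [term', Real.norm_eq_abs, abs_mul, abs_pow, abs_neg]
    gcongr
  refine (hasDerivAt_tsum_of_isPreconnected (g' := term') (y₀ := w) hsum Metric.isOpen_ball
    (convex_ball 0 R).isPreconnected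
    (fun k y _ ↦ ((hasDerivAt_id y).neg.pow k).const_mul (besselCoeff κ k)) hbound hw
    (summable_besselCoeff_mul_pow hκ (-w)) hw).congr_deriv ?_
  rw [(Summable.of_norm_bounded hsum fun k ↦ hbound k w hw).tsum_eq_zero_add, besselSeries,
    ← tsum_neg]
  simp only [hterm']
  simp [term']

theorem continuous_besselSeries (hκ : 0 < κ) : Continuous (besselSeries κ) :=
  continuous_iff_continuousAt.2 fun w ↦ (hasDerivAt_besselSeries hκ w).continuousAt

theorem mul_besselSeries_add_two (hκ : 0 < κ) (w : ℝ) :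
    w * besselSeries (κ + 2) w = κ * besselSeries (κ + 1) w - besselSeries κ w := by
  have hκ1 : 0 < κ + 1 := by positivity
  have hsum := summable_besselCoeff_mul_pow hκ (-w)
  have hsum1 := (summable_besselCoeff_mul_pow hκ1 (-w)).mul_left κ
  have hsub : κ * besselSeries (κ + 1) w - besselSeries κ w =
      ∑' k : ℕ, -(k * besselCoeff (κ + 1) k * (-w) ^ k) := by
    rw [besselSeries, besselSeries, ← tsum_mul_left, ← hsum1.tsum_sub hsum]
    refine tsum_congr fun k ↦ ?_
    rw [← add_mul_besselCoeff_add_one hκ]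
    ring
  have hterm (k : ℕ) : -((k + 1 : ℕ) * besselCoeff (κ + 1) (k + 1) * (-w) ^ (k + 1)) =
      w * (besselCoeff (κ + 2) k * (-w) ^ k) := by
    rw [Nat.cast_succ, succ_mul_besselCoeff_succ, add_assoc, one_add_one_eq_two]
    ring
  have hsumm : Summable fun k : ℕ ↦ -(k * besselCoeff (κ + 1) k * (-w) ^ k) :=
    (hsum1.sub hsum).congr fun k ↦ by rw [← add_mul_besselCoeff_add_one hκ]; ring
  rw [hsub, hsumm.tsum_eq_zero_add, besselSeries, ← tsum_mul_left]
  simp only [hterm]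
  simp

/-- `besselSeries κ` satisfies `w u'' + κ u' + u = 0`, and this is the energy `u' ^ 2 + u ^ 2 / w`
of that equation, which controls the growth of `u` on the half-line. -/
noncomputable def besselEnergy (κ w : ℝ) : ℝ :=
  besselSeries (κ + 1) w ^ 2 + besselSeries κ w ^ 2 / w

theorem besselEnergy_nonneg (κ : ℝ) {w : ℝ} (hw : 0 ≤ w) : 0 ≤ besselEnergy κ w := by
  unfold besselEnergy
  positivity

theorem besselSeries_sq_le (κ : ℝ) {w : ℝ} (hw : 0 < w) :
    besselSeries κ w ^ 2 ≤ besselEnergy κ w * w := by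
  rw [← div_le_iff₀ hw]
  exact le_add_of_nonneg_left (sq_nonneg _)

theorem hasDerivAt_besselEnergy (hκ : 0 < κ) {w : ℝ} (hw : 0 < w) :
    HasDerivAt (besselEnergy κ)
      (-(2 * κ * besselSeries (κ + 1) w ^ 2 / w + besselSeries κ w ^ 2 / w ^ 2)) w := by
  have hd := ((hasDerivAt_besselSeries (by positivity : 0 < κ + 1) w).pow 2).add
    (((hasDerivAt_besselSeries hκ w).pow 2).div (hasDerivAt_id w) hw.ne')
  refine hd.congr_deriv ?_
  have hrec : besselSeries (κ + 1 + 1) w =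
      (κ * besselSeries (κ + 1) w - besselSeries κ w) / w := by
    rw [eq_div_iff hw.ne', ← mul_besselSeries_add_two hκ, add_assoc, one_add_one_eq_two, mul_comm]
  rw [hrec]
  simp only [id, Nat.cast_ofNat, Pi.pow_apply]
  field_simp
  ring

theorem antitoneOn_besselEnergy (hκ : 0 < κ) : AntitoneOn (besselEnergy κ) (Ioi 0) := by
  refine antitoneOn_of_hasDerivWithinAt_nonpos (convex_Ioi 0)
    (fun w hw ↦ (hasDerivAt_besselEnergy hκ hw).continuousAt.continuousWithinAt)
    (fun w hw ↦ (hasDerivAt_besselEnergy hκ (interior_subset hw)).hasDerivWithinAt) fun w hw ↦ ?_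
  have : 0 < w := interior_subset hw
  exact neg_nonpos.2 (by positivity)

theorem exists_abs_besselSeries_le (hκ : 0 < κ) :
    ∃ C, ∀ w, |besselSeries κ (w ^ 2)| ≤ C * (1 + |w|) := by
  obtain ⟨M, hM⟩ := isCompact_Icc.exists_bound_of_continuousOn (s := Icc (0 : ℝ) 1)
    (continuous_besselSeries hκ).continuousOn
  have hM0 : 0 ≤ M := (norm_nonneg _).trans (hM 0 (by simp))
  refine ⟨M + √(besselEnergy κ 1), fun w ↦ ?_⟩
  rcases le_total (w ^ 2) 1 with hw | hw
  · calc |besselSeries κ (w ^ 2)| ≤ M := hM _ ⟨sq_nonneg w, hw⟩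
      _ ≤ (M + √(besselEnergy κ 1)) * (1 + |w|) :=
        (le_add_of_nonneg_right (by positivity)).trans
          (le_mul_of_one_le_right (by positivity) (by simp))
  · have hw0 : 0 < w ^ 2 := one_pos.trans_le hw
    have henergy := antitoneOn_besselEnergy hκ (mem_Ioi.2 one_pos) hw0 hw
    calc |besselSeries κ (w ^ 2)| ≤ √(besselEnergy κ 1 * w ^ 2) :=
          Real.abs_le_sqrt ((besselSeries_sq_le κ hw0).trans
            (mul_le_mul_of_nonneg_right henergy hw0.le))
      _ = √(besselEnergy κ 1) * |w| := by
        rw [Real.sqrt_mul (besselEnergy_nonneg κ zero_le_one), Real.sqrt_sq_eq_abs]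
      _ ≤ (M + √(besselEnergy κ 1)) * (1 + |w|) := by gcongr <;> simp [hM0]

theorem besselJ_ofReal (ν : ℝ) {z : ℝ} (hz : 0 < z) :
    besselJ ν z = ((z / 2) ^ ν * besselSeries (ν + 1) ((z / 2) ^ 2) : ℝ) := by
  have hterm (k : ℕ) : (-1 : ℂ) ^ k / (Complex.Gamma (k + 1) * Complex.Gamma (ν + k + 1)) *
      ((z : ℂ) / 2) ^ (2 * (k : ℂ) + ν) =
      ((z / 2) ^ ν * (besselCoeff (ν + 1) k * (-(z / 2) ^ 2) ^ k) : ℝ) := by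
    have hpow : ((z : ℂ) / 2) ^ (2 * (k : ℂ) + ν) = (((z / 2) ^ 2) ^ k * (z / 2) ^ ν : ℝ) := by
      rw [← pow_mul, ← Real.rpow_natCast, ← Real.rpow_add (by positivity),
        Complex.ofReal_cpow (by positivity)]
      push_cast
      rfl
    have hGamma : Complex.Gamma (ν + k + 1) = (Real.Gamma (ν + 1 + k) : ℂ) := by
      rw [← Complex.Gamma_ofReal]
      push_cast
      rw [add_right_comm]
    rw [hpow, hGamma, Complex.Gamma_nat_eq_factorial, besselCoeff, neg_pow ((z / 2) ^ 2)]
    push_cast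
    ring
  simp only [besselJ, hterm]
  rw [← Complex.ofReal_tsum, tsum_mul_left, besselSeries]

end BesselSeries

section PowerMeasure

/-- The measure `x ^ a dx` on the half-line, viewed as a measure on `ℝ`. -/
noncomputable def powerMeasure (a : ℝ) : Measure ℝ :=
  (volume.restrict (Ioi 0)).withDensity fun x ↦ ENNReal.ofReal (x ^ a)

instance (a : ℝ) : SFinite (powerMeasure a) := by
  unfold powerMeasure
  infer_instance

variable {E : Type*} [NormedAddCommGroup E]

theorem ae_powerMeasure_pos (a : ℝ) : ∀ᵐ x ∂powerMeasure a, 0 < x :=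
  (withDensity_absolutelyContinuous _ _).ae_le (ae_restrict_mem measurableSet_Ioi)

theorem aestronglyMeasurable_powerMeasure {a : ℝ} {f : ℝ → E} (hf : ContinuousOn f (Ioi 0)) :
    AEStronglyMeasurable f (powerMeasure a) :=
  (hf.aestronglyMeasurable measurableSet_Ioi).mono_ac (withDensity_absolutelyContinuous _ _)

variable [NormedSpace ℝ E]

theorem integral_powerMeasure (a : ℝ) (f : ℝ → E) :
    ∫ x, f x ∂powerMeasure a = ∫ x in Ioi (0 : ℝ), x ^ a • f x := by
  rw [powerMeasure, integral_withDensity_eq_integral_toReal_smul (by fun_prop)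
    (ae_of_all _ fun _ ↦ ENNReal.ofReal_lt_top)]
  refine setIntegral_congr_fun measurableSet_Ioi fun x hx ↦ ?_
  simp only [ENNReal.toReal_ofReal (Real.rpow_nonneg (le_of_lt hx) a)]

theorem integrable_powerMeasure_iff (a : ℝ) (f : ℝ → E) :
    Integrable f (powerMeasure a) ↔ IntegrableOn (fun x ↦ x ^ a • f x) (Ioi 0) := by
  rw [powerMeasure, integrable_withDensity_iff_integrable_smul' (by fun_prop)
    (ae_of_all _ fun _ ↦ ENNReal.ofReal_lt_top)]
  refine integrableOn_congr_fun (fun x hx ↦ ?_) measurableSet_Ioi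
  simp only [ENNReal.toReal_ofReal (Real.rpow_nonneg (le_of_lt hx) a)]

end PowerMeasure

section Gaussian

variable {a s : ℝ}

theorem rpow_mul_pow_mul_exp_neg_mul_sq {x : ℝ} (hx : 0 < x) (a s : ℝ) (n : ℕ) :
    x ^ a • (x ^ n * Real.exp (-s * x ^ 2)) = x ^ (a + n) * Real.exp (-s * x ^ (2 : ℝ)) := by
  rw [Real.rpow_add hx, Real.rpow_natCast, Real.rpow_two, mul_assoc, smul_eq_mul]

theorem integrable_pow_mul_exp_neg_mul_sq (ha : -1 < a) (hs : 0 < s) (n : ℕ) :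
    Integrable (fun x ↦ x ^ n * Real.exp (-s * x ^ 2)) (powerMeasure a) := by
  refine (integrable_powerMeasure_iff a _).2 ((integrableOn_congr_fun
    (fun x hx ↦ rpow_mul_pow_mul_exp_neg_mul_sq hx a s n) measurableSet_Ioi).2 ?_)
  exact integrableOn_rpow_mul_exp_neg_mul_rpow (by linarith [n.cast_nonneg (α := ℝ)]) two_pos hs

theorem integral_pow_mul_exp_neg_mul_sq (ha : -1 < a) (hs : 0 < s) (n : ℕ) :
    ∫ x, x ^ n * Real.exp (-s * x ^ 2) ∂powerMeasure a =
      2⁻¹ * s ^ (-((a + n + 1) / 2)) * Real.Gamma ((a + n + 1) / 2) := by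
  rw [integral_powerMeasure, setIntegral_congr_fun measurableSet_Ioi
    fun x hx ↦ rpow_mul_pow_mul_exp_neg_mul_sq hx a s n,
    integral_rpow_mul_exp_neg_mul_rpow two_pos (by linarith [n.cast_nonneg (α := ℝ)]) hs]
  ring_nf

theorem integral_besselSeries_mul_exp_neg_mul_sq (ha : -1 < a) (hs : 0 < s) (β : ℝ) :
    ∫ y, besselSeries ((a + 1) / 2) (β * y ^ 2) * Real.exp (-s * y ^ 2) ∂powerMeasure a =
      2⁻¹ * s ^ (-((a + 1) / 2)) * Real.exp (-β / s) := by
  have hκ : 0 < (a + 1) / 2 := by linarith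
  let term (β : ℝ) (k : ℕ) (y : ℝ) : ℝ :=
    besselCoeff ((a + 1) / 2) k * β ^ k * (y ^ (2 * k) * Real.exp (-s * y ^ 2))
  have hterm (β : ℝ) (k : ℕ) : ∫ y, term β k y ∂powerMeasure a =
      2⁻¹ * s ^ (-((a + 1) / 2)) * ((β / s) ^ k / k.factorial) := by
    have hexponent : (a + (2 * k : ℕ) + 1) / 2 = (a + 1) / 2 + k := by push_cast; ring
    have hGamma := (Gamma_add_nat_pos hκ k).ne'
    rw [integral_const_mul, integral_pow_mul_exp_neg_mul_sq ha hs, hexponent, neg_add,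
      Real.rpow_add hs, Real.rpow_neg hs.le k, Real.rpow_natCast, besselCoeff, mul_inv, div_pow]
    generalize Real.Gamma ((a + 1) / 2 + k) = Γ at hGamma ⊢
    field_simp
  have hexp (β : ℝ) : HasSum (fun k ↦ ∫ y, term β k y ∂powerMeasure a)
      (2⁻¹ * s ^ (-((a + 1) / 2)) * Real.exp (β / s)) := by
    simp only [hterm, Real.exp_eq_exp_ℝ]
    exact (NormedSpace.expSeries_div_hasSum_exp (β / s)).mul_left _
  have hnorm (k : ℕ) (y : ℝ) : ‖term (-β) k y‖ = term |β| k y := by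
    simp only [term, norm_mul, norm_pow, norm_neg, Real.norm_eq_abs, Real.abs_exp,
      abs_of_pos (besselCoeff_pos hκ k), pow_mul, sq_abs]
  have hsum := hasSum_integral_of_summable_integral_norm (F := term (-β)) (μ := powerMeasure a)
    (fun k ↦ (integrable_pow_mul_exp_neg_mul_sq ha hs (2 * k)).const_mul _)
    (by simpa only [hnorm] using (hexp |β|).summable)
  rw [(hexp (-β)).unique hsum]
  refine integral_congr_ae (ae_of_all _ fun y ↦ ?_)
  simp only [besselSeries, term, ← tsum_mul_right]
  refine tsum_congr fun k ↦ ?_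
  rw [← neg_mul, mul_pow, ← pow_mul]
  ring

/-- The Gaussian `e ^ (-s y ^ 2)`, complex-valued so as to belong to the complex `L²` spaces. -/
noncomputable def gaussian (s y : ℝ) : ℂ :=
  Real.exp (-s * y ^ 2)

theorem continuous_gaussian (s : ℝ) : Continuous (gaussian s) := by
  unfold gaussian
  fun_prop

theorem memLp_gaussian (ha : -1 < a) (hs : 0 < s) : MemLp (gaussian s) 2 (powerMeasure a) := by
  refine (memLp_two_iff_integrable_sq_norm
    (aestronglyMeasurable_powerMeasure (continuous_gaussian s).continuousOn)).2 ?_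
  have hsq (y : ℝ) : ‖gaussian s y‖ ^ 2 = y ^ 0 * Real.exp (-(2 * s) * y ^ 2) := by
    rw [gaussian, Complex.norm_real, Real.norm_eq_abs, Real.abs_exp, ← Real.exp_nat_mul]
    ring_nf
  simpa only [hsq] using integrable_pow_mul_exp_neg_mul_sq ha (by positivity) 0

theorem integrable_one_add_abs_smul_gaussian (ha : -1 < a) (hs : 0 < s) :
    Integrable (fun y ↦ (1 + |y|) • gaussian s y) (powerMeasure a) := by
  refine (((integrable_pow_mul_exp_neg_mul_sq ha hs 0).add
    (integrable_pow_mul_exp_neg_mul_sq ha hs 1)).ofReal (𝕜 := ℂ)).congr ?_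
  filter_upwards [ae_powerMeasure_pos a] with y hy
  simp only [gaussian, abs_of_pos hy, Pi.add_apply, pow_zero, pow_one, Complex.real_smul]
  rw [← Complex.ofReal_mul, one_mul, one_add_mul]
  rfl

end Gaussian

section HankelTransform

variable {a b : ℝ}

/-- The kernel `b (xy) ^ ((1 - a) / 2) J_{(a - 1) / 2}(b x y)` of the Hankel transform with
frequency scale `b`, written through `besselSeries` so that it is smooth at `0` too. -/
noncomputable def hankelKernel (a b x y : ℝ) : ℝ :=
  b ^ ((a + 1) / 2) * 2 ^ ((1 - a) / 2) * besselSeries ((a + 1) / 2) ((b * x * y / 2) ^ 2)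

/-- The Hankel transform with respect to the measure `y ^ a dy` on the half-line. -/
noncomputable def hankelTransform (a b : ℝ) (f : ℝ → ℂ) (x : ℝ) : ℂ :=
  ∫ y, hankelKernel a b x y • f y ∂powerMeasure a

theorem hankelKernel_comm (a b x y : ℝ) : hankelKernel a b x y = hankelKernel a b y x := by
  rw [hankelKernel, hankelKernel, mul_right_comm b]

theorem continuous_hankelKernel (ha : -1 < a) (b : ℝ) :
    Continuous fun p : ℝ × ℝ ↦ hankelKernel a b p.1 p.2 := by
  have := continuous_besselSeries (show 0 < (a + 1) / 2 by linarith)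
  unfold hankelKernel
  fun_prop

theorem exists_abs_hankelKernel_le (ha : -1 < a) (b : ℝ) :
    ∃ C, ∀ x y, |hankelKernel a b x y| ≤ C * ((1 + |x|) * (1 + |y|)) := by
  obtain ⟨C, hC⟩ := exists_abs_besselSeries_le (show 0 < (a + 1) / 2 by linarith)
  have hC0 : 0 ≤ C := by simpa using (abs_nonneg _).trans (hC 0)
  let c := |b ^ ((a + 1) / 2) * 2 ^ ((1 - a) / 2)|
  refine ⟨c * C * (1 + |b|), fun x y ↦ ?_⟩
  have hweight : 1 + |b * x * y / 2| ≤ (1 + |b|) * ((1 + |x|) * (1 + |y|)) := by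
    rw [abs_div, abs_mul, abs_mul, abs_two]
    have : 0 ≤ |b| * |x| * |y| := by positivity
    have : 0 ≤ |b| + |x| + |y| + |b| * |x| + |b| * |y| + |x| * |y| := by positivity
    linarith
  calc |hankelKernel a b x y| = c * |besselSeries ((a + 1) / 2) ((b * x * y / 2) ^ 2)| :=
        abs_mul _ _
    _ ≤ c * (C * (1 + |b * x * y / 2|)) := by gcongr; exact hC _
    _ ≤ c * (C * ((1 + |b|) * ((1 + |x|) * (1 + |y|)))) := by gcongr
    _ = _ := by ring

theorem norm_le_norm_one_add_abs_smul (f : ℝ → ℂ) (y : ℝ) : ‖f y‖ ≤ ‖(1 + |y|) • f y‖ := by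
  rw [norm_smul, Real.norm_of_nonneg (by positivity)]
  exact le_mul_of_one_le_left (norm_nonneg _) (by simp)

theorem integrable_of_one_add_abs_smul {μ : Measure ℝ} {f : ℝ → ℂ}
    (hf : Integrable (fun y ↦ (1 + |y|) • f y) μ) : Integrable f μ := by
  have hmeas : AEStronglyMeasurable (fun y ↦ (1 + |y|)⁻¹ • (1 + |y|) • f y) μ :=
    (by fun_prop : Measurable fun y : ℝ ↦ (1 + |y|)⁻¹).aestronglyMeasurable.smul hf.1
  refine hf.mono (hmeas.congr (ae_of_all _ fun y ↦ ?_))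
    (ae_of_all _ (norm_le_norm_one_add_abs_smul f))
  exact inv_smul_smul₀ (by positivity) _

theorem integrable_mul_hankelKernel_smul (ha : -1 < a) {f g : ℝ → ℂ}
    (hf : Integrable (fun y ↦ (1 + |y|) • f y) (powerMeasure a))
    (hg : Integrable (fun y ↦ (1 + |y|) • g y) (powerMeasure a)) :
    Integrable (fun p : ℝ × ℝ ↦ g p.1 * hankelKernel a b p.1 p.2 • f p.2)
      ((powerMeasure a).prod (powerMeasure a)) := by
  obtain ⟨C, hC⟩ := exists_abs_hankelKernel_le ha b
  refine ((hg.norm.mul_prod hf.norm).const_mul C).mono' ?_ (ae_of_all _ fun p ↦ ?_)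
  · exact (integrable_of_one_add_abs_smul hg).1.comp_fst.mul
      ((continuous_hankelKernel ha b).aestronglyMeasurable.smul
        (integrable_of_one_add_abs_smul hf).1.comp_snd)
  · have hweight (y : ℝ) : |(1 + |y|)| = 1 + |y| := abs_of_nonneg (by positivity)
    simp only [norm_mul, norm_smul, Real.norm_eq_abs, hweight]
    calc ‖g p.1‖ * (|hankelKernel a b p.1 p.2| * ‖f p.2‖)
        ≤ ‖g p.1‖ * (C * ((1 + |p.1|) * (1 + |p.2|)) * ‖f p.2‖) := by gcongr; exact hC _ _
      _ = _ := by ring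

theorem integrable_mul_hankelTransform (ha : -1 < a) {f g : ℝ → ℂ}
    (hf : Integrable (fun y ↦ (1 + |y|) • f y) (powerMeasure a))
    (hg : Integrable (fun y ↦ (1 + |y|) • g y) (powerMeasure a)) :
    Integrable (fun x ↦ g x * hankelTransform a b f x) (powerMeasure a) := by
  simpa only [hankelTransform, integral_const_mul] using
    (integrable_mul_hankelKernel_smul (b := b) ha hf hg).integral_prod_left

theorem integral_mul_hankelTransform (ha : -1 < a) {f g : ℝ → ℂ}
    (hf : Integrable (fun y ↦ (1 + |y|) • f y) (powerMeasure a))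
    (hg : Integrable (fun y ↦ (1 + |y|) • g y) (powerMeasure a)) :
    ∫ x, g x * hankelTransform a b f x ∂powerMeasure a =
      ∫ y, hankelTransform a b g y * f y ∂powerMeasure a := by
  simp only [hankelTransform, ← integral_const_mul, ← integral_mul_const]
  rw [integral_integral_swap (integrable_mul_hankelKernel_smul ha hf hg)]
  simp only [hankelKernel_comm a b, mul_smul_comm, smul_mul_assoc]

theorem hankelTransform_const_smul (a b : ℝ) (c : ℝ) (f : ℝ → ℂ) :
    hankelTransform a b (c • f) = c • hankelTransform a b f := by
  ext x
  simp only [hankelTransform, Pi.smul_apply, smul_comm _ c, integral_smul]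

theorem hankelTransform_gaussian (ha : -1 < a) (hb : 0 < b) {s : ℝ} (hs : 0 < s) :
    hankelTransform a b (gaussian s) =
      (b / (2 * s)) ^ ((a + 1) / 2) • gaussian (b ^ 2 / (4 * s)) := by
  ext x
  have hterm (y : ℝ) : hankelKernel a b x y • gaussian s y =
      ((b ^ ((a + 1) / 2) * 2 ^ ((1 - a) / 2) * (besselSeries ((a + 1) / 2)
        ((b * x / 2) ^ 2 * y ^ 2) * Real.exp (-s * y ^ 2)) : ℝ) : ℂ) := by
    rw [hankelKernel, gaussian, Complex.real_smul, ← Complex.ofReal_mul, mul_assoc, ← mul_pow,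
      div_mul_eq_mul_div]
  have htwo : (2 : ℝ) ^ ((1 - a) / 2) = 2 / 2 ^ ((a + 1) / 2) := by
    rw [show (1 - a) / 2 = 1 - (a + 1) / 2 by ring, Real.rpow_sub two_pos, Real.rpow_one]
  simp only [hankelTransform, hterm]
  rw [integral_complex_ofReal, integral_const_mul, integral_besselSeries_mul_exp_neg_mul_sq ha hs,
    Pi.smul_apply, gaussian, Complex.real_smul, ← Complex.ofReal_mul, htwo, Real.rpow_neg hs.le,
    Real.div_rpow hb.le (by positivity), Real.mul_rpow two_pos.le hs.le]
  congr 1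
  field_simp
  ring_nf

theorem hankelTransform_hankelTransform_gaussian (ha : -1 < a) (hb : 0 < b) {s : ℝ} (hs : 0 < s) :
    hankelTransform a b (hankelTransform a b (gaussian s)) = gaussian s := by
  have hscale : b / (2 * s) * (b / (2 * (b ^ 2 / (4 * s)))) = 1 := by field_simp; norm_num
  have hwidth : b ^ 2 / (4 * (b ^ 2 / (4 * s))) = s := by field_simp
  rw [hankelTransform_gaussian ha hb hs, hankelTransform_const_smul,
    hankelTransform_gaussian ha hb (by positivity), smul_smul,
    ← Real.mul_rpow (by positivity) (by positivity), hscale, hwidth, Real.one_rpow, one_smul]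

end HankelTransform

section Uniqueness

theorem integral_continuous_comp_smul_eq_zero {α E : Type*} [MeasurableSpace α] {μ : Measure α}
    [NormedAddCommGroup E] [NormedSpace ℝ E] {h : α → E} {u : α → ℝ} {c d : ℝ}
    (hh : Integrable h μ) (hu : AEStronglyMeasurable u μ) (hucd : ∀ᵐ x ∂μ, u x ∈ Icc c d)
    (hmoment : ∀ k : ℕ, ∫ x, u x ^ k • h x ∂μ = 0) {G : ℝ → ℝ}
    (hG : ContinuousOn G (Icc c d)) : ∫ x, G (u x) • h x ∂μ = 0 := by
  obtain ⟨M, hM⟩ := isCompact_Icc.exists_bound_of_continuousOn hG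
  choose p hp using fun n : ℕ ↦
    exists_polynomial_near_of_continuousOn c d G hG (1 / (n + 1)) (by positivity)
  have hbounded {H : ℝ → ℝ} (hH : Continuous H) : Integrable (fun x ↦ H (u x) • h x) μ := by
    obtain ⟨B, hB⟩ := isCompact_Icc.exists_bound_of_continuousOn (s := Icc c d) hH.continuousOn
    exact hh.bdd_smul B (hH.comp_aestronglyMeasurable hu) (hucd.mono fun x hx ↦ hB _ hx)
  have hpoly (q : Polynomial ℝ) : ∫ x, q.eval (u x) • h x ∂μ = 0 := by
    simp only [Polynomial.eval_eq_sum_range, Finset.sum_smul, mul_smul]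
    rw [integral_finsetSum]
    · simp only [integral_smul, hmoment, smul_zero, Finset.sum_const_zero]
    · exact fun k _ ↦ (hbounded (continuous_pow k)).smul (q.coeff k)
  have hlim : Tendsto (fun n ↦ ∫ x, (p n).eval (u x) • h x ∂μ) atTop
      (nhds (∫ x, G (u x) • h x ∂μ)) := by
    refine tendsto_integral_of_dominated_convergence (fun x ↦ (M + 1) * ‖h x‖)
      (fun n ↦ (hbounded (p n).continuous).1) (hh.norm.const_mul _) (fun n ↦ ?_) ?_
    · filter_upwards [hucd] with x hx
      have hn : 1 / (n + 1 : ℝ) ≤ 1 := (div_le_one (by positivity)).2 (by simp)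
      have hpn : ‖(p n).eval (u x)‖ ≤ M + 1 := calc
        ‖(p n).eval (u x)‖ ≤ ‖G (u x)‖ + ‖(p n).eval (u x) - G (u x)‖ := norm_le_insert' _ _
        _ ≤ M + 1 := add_le_add (hM _ hx) ((hp n _ hx).le.trans hn)
      rw [norm_smul]
      gcongr
    · filter_upwards [hucd] with x hx
      exact (tendsto_iff_norm_sub_tendsto_zero.2 (squeeze_zero (fun n ↦ norm_nonneg _)
        (fun n ↦ (hp n _ hx).le) tendsto_one_div_add_atTop_nhds_zero_nat)).smul_const _
  simp only [hpoly] at hlim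
  exact tendsto_nhds_unique hlim tendsto_const_nhds

theorem continuous_comp_sqrt_neg_log {g : ℝ → ℝ} (hg : Continuous g) (hg0 : g 0 = 0)
    (hlim : Tendsto g atTop (nhds 0)) : Continuous fun v ↦ g (√(-Real.log v)) := by
  refine continuous_iff_continuousAt.2 fun v ↦ ?_
  rcases eq_or_ne v 0 with rfl | hv
  · -- As `Real.log 0 = 0`, the value at `0` is `g 0`, but the limit there is that of `g` at `∞`.
    have hval : g (√(-Real.log 0)) = 0 := by rw [Real.log_zero, neg_zero, Real.sqrt_zero, hg0]
    rw [continuousAt_iff_punctured_nhds, hval]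
    exact hlim.comp (Real.tendsto_sqrt_atTop.comp
      (tendsto_neg_atBot_atTop.comp Real.tendsto_log_nhdsNE_zero))
  · exact (hg.comp Real.continuous_sqrt).continuousAt.comp (Real.continuousAt_log hv).neg

/-- On the half-line, a test function is a continuous function of `u = e ^ (-y ^ 2) ∈ (0, 1]`, and
the hypothesis says that the moments of `u` vanish. -/
theorem ae_eq_zero_of_integral_gaussian_mul_eq_zero {μ : Measure ℝ} (hμ : ∀ᵐ y ∂μ, 0 < y)
    {f : ℝ → ℂ} (hf : Integrable (fun y ↦ gaussian 1 y * f y) μ)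
    (hint : ∀ k : ℕ, ∫ y, gaussian (k + 1) y * f y ∂μ = 0) : f =ᵐ[μ] 0 := by
  let u (y : ℝ) : ℝ := Real.exp (-y ^ 2)
  have hu : Continuous u := by fun_prop
  have hu01 (y : ℝ) : u y ∈ Icc 0 1 := ⟨by positivity, Real.exp_le_one_iff.2 (by simp [sq_nonneg])⟩
  have hpow (k : ℕ) (y : ℝ) : u y ^ k • (gaussian 1 y * f y) = gaussian (k + 1) y * f y := by
    rw [Complex.real_smul, ← mul_assoc, gaussian, gaussian, ← Complex.ofReal_mul,
      ← Real.exp_nat_mul, ← Real.exp_add]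
    ring_nf
  have hzero : ∀ᵐ y ∂μ, y ∈ Ioi 0 → gaussian 1 y * f y = 0 := by
    refine isOpen_Ioi.ae_eq_zero_of_integral_contDiff_smul_eq_zero
      (hf.locallyIntegrable.locallyIntegrableOn _) fun g hg hgc hgU ↦ ?_
    have hg0 : g 0 = 0 := image_eq_zero_of_notMem_tsupport fun h0 ↦ (mem_Ioi.1 (hgU h0)).false
    rw [← integral_continuous_comp_smul_eq_zero hf hu.aestronglyMeasurable (ae_of_all _ hu01)
      (fun k ↦ by simpa only [hpow] using hint k)
      (continuous_comp_sqrt_neg_log hg.continuous hg0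
        (hgc.is_zero_at_infty.mono_left atTop_le_cocompact)).continuousOn]
    refine integral_congr_ae ?_
    filter_upwards [hμ] with y hy
    simp only [u, Real.log_exp, neg_neg, Real.sqrt_sq hy.le]
  filter_upwards [hμ, hzero] with y hy hfy
  exact (mul_eq_zero.1 (hfy hy)).resolve_left (Complex.ofReal_ne_zero.2 (Real.exp_ne_zero _))

end Uniqueness

section GramMatrix

variable {𝕜 H H' ι : Type*} [RCLike 𝕜] [NormedAddCommGroup H] [InnerProductSpace 𝕜 H]
  [NormedAddCommGroup H'] [InnerProductSpace 𝕜 H']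

theorem norm_linearCombination_eq_of_inner_eq {u : ι → H} {v : ι → H'}
    (hgram : ∀ i j, inner 𝕜 (v i) (v j) = inner 𝕜 (u i) (u j)) (c : ι →₀ 𝕜) :
    ‖Finsupp.linearCombination 𝕜 v c‖ = ‖Finsupp.linearCombination 𝕜 u c‖ := by
  simp only [@norm_eq_sqrt_re_inner 𝕜, Finsupp.linearCombination_apply, Finsupp.sum_inner,
    Finsupp.inner_sum, inner_smul_left, inner_smul_right, hgram]

theorem exists_linearIsometry_of_inner_eq [CompleteSpace H'] {u : ι → H} {v : ι → H'}
    (hu : Dense (Submodule.span 𝕜 (range u) : Set H))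
    (hgram : ∀ i j, inner 𝕜 (v i) (v j) = inner 𝕜 (u i) (u j)) :
    ∃ T : H →ₗᵢ[𝕜] H', ∀ i, T (u i) = v i := by
  have hdense : DenseRange (Finsupp.linearCombination 𝕜 u) := by
    rwa [DenseRange, ← LinearMap.coe_range, Finsupp.range_linearCombination]
  have hnorm := norm_linearCombination_eq_of_inner_eq hgram
  let T := (Finsupp.linearCombination 𝕜 v).extendOfNorm (Finsupp.linearCombination 𝕜 u)
  have hT (c : ι →₀ 𝕜) : T (Finsupp.linearCombination 𝕜 u c) = Finsupp.linearCombination 𝕜 v c :=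
    LinearMap.extendOfNorm_eq hdense ⟨1, fun c ↦ by rw [hnorm, one_mul]⟩ c
  refine ⟨⟨T.toLinearMap, fun x ↦ ?_⟩, fun i ↦ by simpa using hT (Finsupp.single i 1)⟩
  refine hdense.induction_on (p := fun x ↦ ‖T x‖ = ‖x‖) x (isClosed_eq (by fun_prop) (by fun_prop))
    fun c ↦ by rw [hT, hnorm]

/-- `F` is the image of `f` under the symmetric isometry that maps each `u i` to `v i`. -/
theorem exists_norm_eq_and_forall_inner_eq [CompleteSpace H] {u v : ι → H}
    (hu : Dense (Submodule.span 𝕜 (range u) : Set H))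
    (hgram : ∀ i j, inner 𝕜 (v i) (v j) = inner 𝕜 (u i) (u j))
    (hsymm : ∀ i j, inner 𝕜 (u i) (v j) = inner 𝕜 (v i) (u j)) (f : H) :
    ∃ F : H, ‖F‖ = ‖f‖ ∧ ∀ i, inner 𝕜 (u i) F = inner 𝕜 (v i) f := by
  obtain ⟨T, hT⟩ := exists_linearIsometry_of_inner_eq hu hgram
  refine ⟨T f, T.norm_map f, fun i ↦ ?_⟩
  have heqOn :
      EqOn ((innerSL 𝕜 (u i)).comp T.toContinuousLinearMap) (innerSL 𝕜 (v i)) (range u) := by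
    rintro _ ⟨j, rfl⟩
    simpa [hT] using hsymm i j
  exact DFunLike.congr_fun (ContinuousLinearMap.ext_on hu heqOn) f

end GramMatrix

section L2

variable {α : Type*} [MeasurableSpace α] {μ : Measure α}

theorem norm_Lp_two_sq (F : Lp ℂ 2 μ) : ‖F‖ ^ 2 = ∫ x, ‖F x‖ ^ 2 ∂μ := by
  apply Complex.ofReal_injective
  rw [← integral_complex_ofReal, Complex.ofReal_pow, ← RCLike.ofReal_eq_complex_ofReal,
    ← inner_self_eq_norm_sq_to_K, L2.inner_def]
  simp only [inner_self_eq_norm_sq_to_K, RCLike.ofReal_eq_complex_ofReal, Complex.ofReal_pow]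

theorem inner_toLp_left {f : α → ℂ} (hf : MemLp f 2 μ) (F : Lp ℂ 2 μ) :
    inner ℂ (hf.toLp f) F = ∫ x, starRingEnd ℂ (f x) * F x ∂μ := by
  rw [L2.inner_def]
  refine integral_congr_ae ?_
  filter_upwards [hf.coeFn_toLp] with x hx
  rw [hx, RCLike.inner_apply']

theorem inner_toLp_toLp {f g : α → ℂ} (hf : MemLp f 2 μ) (hg : MemLp g 2 μ) :
    inner ℂ (hf.toLp f) (hg.toLp g) = ∫ x, starRingEnd ℂ (f x) * g x ∂μ := by
  rw [inner_toLp_left]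
  refine integral_congr_ae ?_
  filter_upwards [hg.coeFn_toLp] with x hx
  rw [hx]

end L2

section Plancherel

variable {a b : ℝ}

theorem conj_gaussian (s y : ℝ) : starRingEnd ℂ (gaussian s y) = gaussian s y :=
  Complex.conj_ofReal _

theorem integrable_gaussian_mul (ha : -1 < a) {s : ℝ} (hs : 0 < s) (F : Lp ℂ 2 (powerMeasure a)) :
    Integrable (fun y ↦ gaussian s y * F y) (powerMeasure a) :=
  (memLp_gaussian ha hs).integrable_mul (Lp.memLp F)

theorem dense_span_gaussian (ha : -1 < a) :
    Dense (Submodule.span ℂ (range fun k : ℕ ↦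
      (memLp_gaussian ha (Nat.cast_add_one_pos k)).toLp (gaussian (k + 1))) :
        Set (Lp ℂ 2 (powerMeasure a))) := by
  rw [Submodule.dense_iff_topologicalClosure_eq_top, Submodule.topologicalClosure_eq_top_iff,
    Submodule.eq_bot_iff]
  intro F hF
  refine (Lp.eq_zero_iff_ae_eq_zero).2 (ae_eq_zero_of_integral_gaussian_mul_eq_zero
    (ae_powerMeasure_pos a) (integrable_gaussian_mul ha one_pos F) fun k ↦ ?_)
  have hinner := (Submodule.mem_orthogonal _ F).1 hF _ (Submodule.subset_span (mem_range_self k))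
  simpa only [inner_toLp_left, conj_gaussian] using hinner

theorem conj_hankelTransform_gaussian (ha : -1 < a) (hb : 0 < b) {s : ℝ} (hs : 0 < s) (x : ℝ) :
    starRingEnd ℂ (hankelTransform a b (gaussian s) x) = hankelTransform a b (gaussian s) x := by
  rw [hankelTransform_gaussian ha hb hs, Pi.smul_apply, Complex.real_smul, map_mul,
    Complex.conj_ofReal, conj_gaussian]

theorem memLp_hankelTransform_gaussian (ha : -1 < a) (hb : 0 < b) {s : ℝ} (hs : 0 < s) :
    MemLp (hankelTransform a b (gaussian s)) 2 (powerMeasure a) := by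
  rw [hankelTransform_gaussian ha hb hs]
  exact (memLp_gaussian ha (by positivity)).const_smul _

theorem integrable_one_add_abs_smul_hankelTransform_gaussian (ha : -1 < a) (hb : 0 < b) {s : ℝ}
    (hs : 0 < s) :
    Integrable (fun x ↦ (1 + |x|) • hankelTransform a b (gaussian s) x) (powerMeasure a) := by
  have hwidth : 0 < b ^ 2 / (4 * s) := by positivity
  simp only [hankelTransform_gaussian ha hb hs, Pi.smul_apply,
    smul_comm _ ((b / (2 * s)) ^ ((a + 1) / 2))]
  exact (integrable_one_add_abs_smul_gaussian ha hwidth).smul ((b / (2 * s)) ^ ((a + 1) / 2))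

theorem exists_norm_eq_and_integral_gaussian_mul_eq (ha : -1 < a) (hb : 0 < b)
    (f : Lp ℂ 2 (powerMeasure a)) :
    ∃ F : Lp ℂ 2 (powerMeasure a), ‖F‖ = ‖f‖ ∧ ∀ k : ℕ,
      ∫ x, gaussian (k + 1) x * F x ∂powerMeasure a =
        ∫ y, hankelTransform a b (gaussian (k + 1)) y * f y ∂powerMeasure a := by
  have hpos (k : ℕ) : (0 : ℝ) < k + 1 := Nat.cast_add_one_pos k
  have hg (k : ℕ) := integrable_one_add_abs_smul_gaussian ha (hpos k)
  have hHg (k : ℕ) := integrable_one_add_abs_smul_hankelTransform_gaussian ha hb (hpos k)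
  have hmem (k : ℕ) := memLp_gaussian ha (hpos k)
  have hHmem (k : ℕ) := memLp_hankelTransform_gaussian ha hb (hpos k)
  have hgram (i j : ℕ) : inner ℂ ((hHmem i).toLp _) ((hHmem j).toLp _) =
      inner ℂ ((hmem i).toLp _) ((hmem j).toLp _) := by
    simp only [inner_toLp_toLp, conj_gaussian, conj_hankelTransform_gaussian ha hb (hpos i)]
    rw [integral_mul_hankelTransform ha (hg j) (hHg i),
      hankelTransform_hankelTransform_gaussian ha hb (hpos i)]
  have hsymm (i j : ℕ) : inner ℂ ((hmem i).toLp _) ((hHmem j).toLp _) =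
      inner ℂ ((hHmem i).toLp _) ((hmem j).toLp _) := by
    simp only [inner_toLp_toLp, conj_gaussian, conj_hankelTransform_gaussian ha hb (hpos i)]
    exact integral_mul_hankelTransform ha (hg j) (hg i)
  obtain ⟨F, hnorm, hF⟩ :=
    exists_norm_eq_and_forall_inner_eq (dense_span_gaussian ha) hgram hsymm f
  refine ⟨F, hnorm, fun k ↦ ?_⟩
  simpa only [inner_toLp_left, conj_gaussian, conj_hankelTransform_gaussian ha hb (hpos k)]
    using hF k

theorem integral_norm_sq_hankelTransform (ha : -1 < a) (hb : 0 < b) {f : ℝ → ℂ}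
    (hf₂ : MemLp f 2 (powerMeasure a))
    (hf₁ : Integrable (fun y ↦ (1 + |y|) • f y) (powerMeasure a)) :
    ∫ x, ‖hankelTransform a b f x‖ ^ 2 ∂powerMeasure a = ∫ y, ‖f y‖ ^ 2 ∂powerMeasure a := by
  obtain ⟨F, hnorm, hF⟩ := exists_norm_eq_and_integral_gaussian_mul_eq ha hb (hf₂.toLp f)
  have hFint {s : ℝ} (hs : 0 < s) := integrable_gaussian_mul ha hs F
  have hHint {s : ℝ} (hs : 0 < s) := integrable_mul_hankelTransform (b := b) ha hf₁
    (integrable_one_add_abs_smul_gaussian ha hs)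
  have hFf : (fun x ↦ F x - hankelTransform a b f x) =ᵐ[powerMeasure a] 0 := by
    refine ae_eq_zero_of_integral_gaussian_mul_eq_zero (ae_powerMeasure_pos a) ?_ fun k ↦ ?_
    · simp only [mul_sub]
      exact (hFint one_pos).sub (hHint one_pos)
    · have hpos : (0 : ℝ) < k + 1 := Nat.cast_add_one_pos k
      simp only [mul_sub]
      rw [integral_sub (hFint hpos) (hHint hpos), hF, sub_eq_zero,
        integral_mul_hankelTransform ha hf₁ (integrable_one_add_abs_smul_gaussian ha hpos)]
      exact integral_congr_ae (hf₂.coeFn_toLp.mono fun y hy ↦ by simp only [hy])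
  calc ∫ x, ‖hankelTransform a b f x‖ ^ 2 ∂powerMeasure a
      = ∫ x, ‖F x‖ ^ 2 ∂powerMeasure a :=
        integral_congr_ae (hFf.mono fun x hx ↦ by simp only [← sub_eq_zero.1 hx])
    _ = ∫ y, ‖hf₂.toLp f y‖ ^ 2 ∂powerMeasure a := by
        rw [← norm_Lp_two_sq, hnorm, norm_Lp_two_sq]
    _ = ∫ y, ‖f y‖ ^ 2 ∂powerMeasure a :=
        integral_congr_ae (hf₂.coeFn_toLp.mono fun y hy ↦ by simp only [hy])

end Plancherel

section Schrodinger

variable {a t : ℝ}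

theorem rpow_mul_besselJ_eq_hankelKernel {b x y : ℝ} (hb : 0 < b) (hx : 0 < x) (hy : 0 < y) :
    ((b ^ ((a + 1) / 2) * (b * x * y) ^ ((1 - a) / 2) : ℝ) : ℂ) *
      besselJ ((a - 1) / 2 : ℝ) (b * x * y) = hankelKernel a b x y := by
  have hz : 0 < b * x * y := by positivity
  have hpow : (b * x * y) ^ ((1 - a) / 2) * (b * x * y / 2) ^ ((a - 1) / 2) =
      2 ^ ((1 - a) / 2) := by
    rw [show (a - 1) / 2 = -((1 - a) / 2) by ring, Real.rpow_neg (by positivity),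
      ← div_eq_mul_inv, ← Real.div_rpow hz.le (by positivity), div_div_cancel₀ hz.ne']
  rw [besselJ_ofReal _ hz, ← Complex.ofReal_mul, hankelKernel, ← hpow,
    show (a - 1) / 2 + 1 = (a + 1) / 2 by ring]
  congr 1
  ring

theorem Skernel_eq_mul_exp (ht : t ≠ 0) (a x y : ℝ) :
    Skernel a x y t = (((2 * |t|) ^ (-(a + 1) / 2) : ℝ) : ℂ) *
      (((x * y / (2 * |t|)) ^ ((1 - a) / 2) : ℝ) : ℂ) *
      besselJ ((a - 1) / 2 : ℝ) (x * y / (2 * |t|)) *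
      Complex.exp (((x ^ 2 + y ^ 2) / (4 * t) - t.sign * ((a + 1) * Real.pi / 4) : ℝ) *
        Complex.I) := by
  have hphase : ((x ^ 2 + y ^ 2) / (4 * t) - t.sign * ((a + 1) * Real.pi / 4) : ℝ) =
      t.sign * ((x ^ 2 + y ^ 2) / (4 * |t|) - (a + 1) * Real.pi / 4) := by
    rcases ht.lt_or_gt with hneg | hpos
    · rw [Real.sign_of_neg hneg, abs_of_neg hneg]
      ring
    · rw [Real.sign_of_pos hpos, abs_of_pos hpos]
      ring
  have hexp (ε : ℝ) : Complex.exp ((ε * ((x ^ 2 + y ^ 2) / (4 * |t|) - (a + 1) * Real.pi / 4) : ℝ)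
      * Complex.I) = Complex.exp (-(ε * Complex.I) * ((a + 1) * Real.pi / 4 : ℝ)) *
        Complex.exp (ε * Complex.I * ((x ^ 2 + y ^ 2) / (4 * |t|) : ℝ)) := by
    rw [← Complex.exp_add]
    push_cast
    ring_nf
  rw [hphase, hexp, Skernel]
  rcases ht.lt_or_gt with hneg | hpos
  · rw [if_neg hneg.not_gt, Real.sign_of_neg hneg, Complex.ofReal_neg, Complex.ofReal_one,
      neg_one_mul, neg_neg]
    ring
  · rw [if_pos hpos, Real.sign_of_pos hpos, Complex.ofReal_one, one_mul]
    ring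

theorem Skernel_eq_exp_mul_hankelKernel_mul_exp (ht : t ≠ 0) {x y : ℝ} (hx : 0 < x) (hy : 0 < y) :
    Skernel a x y t =
      Complex.exp ((x ^ 2 / (4 * t) - t.sign * ((a + 1) * Real.pi / 4) : ℝ) * Complex.I) *
        hankelKernel a (2 * |t|)⁻¹ x y * Complex.exp ((y ^ 2 / (4 * t) : ℝ) * Complex.I) := by
  have hscale : (2 * |t|) ^ (-(a + 1) / 2) = (2 * |t|)⁻¹ ^ ((a + 1) / 2) := by
    rw [neg_div, Real.rpow_neg_eq_inv_rpow]
  have harg : x * y / (2 * |t|) = (2 * |t|)⁻¹ * x * y := by ring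
  rw [Skernel_eq_mul_exp ht, hscale, harg, ← Complex.ofReal_mul,
    rpow_mul_besselJ_eq_hankelKernel (by positivity) hx hy, mul_right_comm, ← Complex.exp_add,
    mul_comm, ← add_mul, ← Complex.ofReal_add]
  ring_nf

/-- Multiplication by the chirp `e ^ (i y ^ 2 / (4 t))`, the unimodular factor by which the
Schrödinger operator differs from a Hankel transform. -/
noncomputable def chirp (t : ℝ) (φ : ℝ → ℂ) (y : ℝ) : ℂ :=
  Complex.exp ((y ^ 2 / (4 * t) : ℝ) * Complex.I) * φ y

theorem norm_chirp (t : ℝ) (φ : ℝ → ℂ) (y : ℝ) : ‖chirp t φ y‖ = ‖φ y‖ := by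
  rw [chirp, norm_mul, Complex.norm_exp_ofReal_mul_I, one_mul]

theorem aestronglyMeasurable_chirp {μ : Measure ℝ} {φ : ℝ → ℂ} (hφ : AEStronglyMeasurable φ μ)
    (t : ℝ) : AEStronglyMeasurable (chirp t φ) μ :=
  (by fun_prop : Continuous fun y : ℝ ↦
    Complex.exp ((y ^ 2 / (4 * t) : ℝ) * Complex.I)).aestronglyMeasurable.mul hφ

theorem memLp_chirp {μ : Measure ℝ} {p : ENNReal} {φ : ℝ → ℂ} (hφ : MemLp φ p μ) (t : ℝ) :
    MemLp (chirp t φ) p μ :=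
  hφ.of_le (aestronglyMeasurable_chirp hφ.1 t) (ae_of_all _ fun y ↦ (norm_chirp t φ y).le)

theorem chirp_smul (t : ℝ) (w : ℝ → ℝ) (φ : ℝ → ℂ) : chirp t (w • φ) = w • chirp t φ := by
  ext y
  exact mul_smul_comm (w y) _ (φ y)

theorem norm_Sop (ht : t ≠ 0) (φ : ℝ → ℂ) {x : ℝ} (hx : 0 < x) :
    ‖Sop a t φ x‖ = ‖hankelTransform a (2 * |t|)⁻¹ (chirp t φ) x‖ := by
  have hSop : Sop a t φ x =
      Complex.exp ((x ^ 2 / (4 * t) - t.sign * ((a + 1) * Real.pi / 4) : ℝ) * Complex.I) *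
        hankelTransform a (2 * |t|)⁻¹ (chirp t φ) x := by
    rw [Sop, hankelTransform, integral_powerMeasure, ← integral_const_mul]
    refine setIntegral_congr_fun measurableSet_Ioi fun y hy ↦ ?_
    simp only [Skernel_eq_exp_mul_hankelKernel_mul_exp ht hx hy, chirp, Complex.real_smul]
    ring
  rw [hSop, norm_mul, Complex.norm_exp_ofReal_mul_I, one_mul]

theorem sop_isometry_general (ha : -1 < a) {φ : ℝ → ℂ} (hφ₂ : MemLp φ 2 (powerMeasure a))
    (hφ₁ : Integrable (fun y ↦ (1 + |y|) • φ y) (powerMeasure a)) (ht : t ≠ 0) :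
    ∫ x in Ioi (0 : ℝ), ‖Sop a t φ x‖ ^ 2 * x ^ a = ∫ x in Ioi (0 : ℝ), ‖φ x‖ ^ 2 * x ^ a := by
  have hchirp : Integrable (fun y ↦ (1 + |y|) • chirp t φ y) (powerMeasure a) := by
    have hmem := memLp_chirp (memLp_one_iff_integrable.2 hφ₁) t
    rwa [← Pi.smul_def', chirp_smul, memLp_one_iff_integrable] at hmem
  have hplancherel := integral_norm_sq_hankelTransform ha
    (show 0 < (2 * |t|)⁻¹ by positivity) (memLp_chirp hφ₂ t) hchirp
  simp only [integral_powerMeasure, smul_eq_mul, mul_comm _ (‖_‖ ^ 2), norm_chirp] at hplancherel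
  rw [← hplancherel]
  refine setIntegral_congr_fun measurableSet_Ioi fun x hx ↦ ?_
  simp only [norm_Sop ht φ hx]

end Schrodinger

section RapidDecay

variable {a : ℝ} {φ : ℝ → ℂ}

theorem integrable_powerMeasure_of_pow_mul_norm_le {E : Type*} [NormedAddCommGroup E]
    (ha : -1 < a) {f : ℝ → E} (hf : ContinuousOn f (Ioi 0))
    (hdecay : ∀ m : ℕ, ∃ C, ∀ y > 0, y ^ m * ‖f y‖ ≤ C) : Integrable f (powerMeasure a) := by
  rw [← integrable_norm_iff (aestronglyMeasurable_powerMeasure hf), integrable_powerMeasure_iff]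
  obtain ⟨m, hm⟩ := exists_nat_gt (a + 1)
  obtain ⟨A, hA⟩ := hdecay m
  obtain ⟨B, hB⟩ := hdecay 0
  have htop : (fun y ↦ ‖f y‖) =O[atTop] fun y ↦ y ^ (-(m : ℝ)) := by
    refine Asymptotics.IsBigO.of_bound A ?_
    filter_upwards [eventually_gt_atTop 0] with y hy
    rw [norm_norm, Real.norm_of_nonneg (by positivity), Real.rpow_neg hy.le, Real.rpow_natCast,
      ← div_eq_mul_inv, le_div_iff₀ (by positivity), mul_comm]
    exact hA y hy
  have hzero : (fun y ↦ ‖f y‖) =O[nhdsWithin 0 (Ioi 0)] fun y ↦ y ^ (-(0 : ℝ)) := by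
    refine Asymptotics.IsBigO.of_bound B ?_
    filter_upwards [self_mem_nhdsWithin] with y hy
    simpa using hB y hy
  simpa using mellin_convergent_of_isBigO_scalar
    (hf.norm.locallyIntegrableOn measurableSet_Ioi) htop hm hzero (by linarith)

theorem SPlus.exists_pow_mul_norm_le (hφ : SPlus φ) (m : ℕ) :
    ∃ C, ∀ y > 0, y ^ m * ‖φ y‖ ≤ C := by
  obtain ⟨C, hC⟩ := hφ.2 m 0
  refine ⟨C, fun y hy ↦ ?_⟩
  simpa only [DIter, norm_mul, norm_pow, Complex.norm_of_nonneg (le_of_lt hy)] using hC y hy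

theorem SPlus.memLp_two (ha : -1 < a) (hφ : SPlus φ) : MemLp φ 2 (powerMeasure a) := by
  have hcont := hφ.1.continuousOn
  refine (memLp_two_iff_integrable_sq_norm (aestronglyMeasurable_powerMeasure hcont)).2
    (integrable_powerMeasure_of_pow_mul_norm_le ha (hcont.norm.pow 2) fun m ↦ ?_)
  obtain ⟨A, hA⟩ := hφ.exists_pow_mul_norm_le m
  obtain ⟨B, hB⟩ := hφ.exists_pow_mul_norm_le 0
  refine ⟨A * B, fun y hy ↦ ?_⟩
  rw [norm_pow, norm_norm, sq, ← mul_assoc]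
  have hA0 : 0 ≤ A := (by positivity : 0 ≤ y ^ m * ‖φ y‖).trans (hA y hy)
  exact mul_le_mul (hA y hy) (by simpa using hB y hy) (norm_nonneg _) hA0

theorem SPlus.integrable_one_add_abs_smul (ha : -1 < a) (hφ : SPlus φ) :
    Integrable (fun y ↦ (1 + |y|) • φ y) (powerMeasure a) := by
  have hcont := hφ.1.continuousOn
  refine integrable_powerMeasure_of_pow_mul_norm_le ha (by fun_prop) fun m ↦ ?_
  obtain ⟨A, hA⟩ := hφ.exists_pow_mul_norm_le m
  obtain ⟨B, hB⟩ := hφ.exists_pow_mul_norm_le (m + 1)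
  refine ⟨A + B, fun y hy ↦ ?_⟩
  calc y ^ m * ‖(1 + |y|) • φ y‖ = y ^ m * ‖φ y‖ + y ^ (m + 1) * ‖φ y‖ := by
        rw [abs_of_pos hy, norm_smul, Real.norm_of_nonneg (by positivity)]
        ring
    _ ≤ A + B := add_le_add (hA y hy) (hB y hy)

end RapidDecay

/-- For `a > -1`, `φ ∈ 𝒮⁺` and `t ≠ 0`, the operator `S_a(t)` is an isometry of `L²_a`. -/
theorem sop_isometry (a : ℝ) (ha : -1 < a) (φ : ℝ → ℂ) (hφ : SPlus φ) (t : ℝ) (ht : t ≠ 0) :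
    ∫ x in Ioi (0:ℝ), ‖Sop a t φ x‖ ^ 2 * x ^ a = ∫ x in Ioi (0:ℝ), ‖φ x‖ ^ 2 * x ^ a :=
  sop_isometry_general ha (hφ.memLp_two ha) (hφ.integrable_one_add_abs_smul ha) ht
end

section
/- Let a ≥ 0. There exists a constant C(a) > 0 such that for all x, y > 0 and all t ≠ 0 one has |S_a(x,y,t)| ≤ C(a) |t|^{−(a+1)/2}. -/
open MeasureTheory Filter Set

/-!
Write `F_s` for the regularized hypergeometric function `₀F₁(s; ·)`, so that
`J_ν(z) = (z / 2) ^ ν * F_{ν + 1}(-(z / 2) ^ 2)`. From `F_s' = F_{s + 1}` and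
`F_s(w) = s F_{s + 1}(w) + w F_{s + 2}(w)`, the energy `|F_s(w)|² - w |F_{s + 1}(w)|²` on the real
line has derivative `(2 Re s - 1) |F_{s + 1}(w)|²`, so it is monotone when `Re s ≥ 1 / 2`. For
`w ≤ 0` it dominates `|F_s(w)|²`, whence `|F_s(w)| ≤ |F_s(0)| = 1 / |Γ(s)|`. This gives
`|J_ν(z)| ≤ (z / 2) ^ (Re ν) / |Γ(ν + 1)|` for `Re ν ≥ -1 / 2`, and at `ν = (a - 1) / 2` the power
of `z = x y / (2 |t|)` cancels the one in the kernel.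
-/

section PowerSeries

variable {𝕜 F : Type*} [NontriviallyNormedField 𝕜] [NormedAddCommGroup F] [NormedSpace 𝕜 F]
  [CompleteSpace F]

theorem hasSum_deriv_of_hasFPowerSeriesOnBall {f : 𝕜 → F} {p : FormalMultilinearSeries 𝕜 𝕜 F}
    {x y : 𝕜} {r : ENNReal} (hf : HasFPowerSeriesOnBall f p x r) (hy : y ∈ Metric.eball 0 r) :
    HasSum (fun n : ℕ => y ^ n • (n + 1) • p.coeff (n + 1)) (deriv f (x + y)) := by
  have h := (hf.fderiv.hasSum hy).mapL (ContinuousLinearMap.apply 𝕜 F 1)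
  simpa using h

end PowerSeries

section Hypergeometric

open Complex

theorem regularizedHGFun_eq_tsum (a b : Multiset ℂ) (w : ℂ) :
    regularizedHGFun a b w = ∑' n : ℕ, w ^ n * regularizedHGFunCoeff a b n := by
  simp [regularizedHGFun, FormalMultilinearSeries.sum]

theorem regularizedHGFun_apply_zero (a b : Multiset ℂ) :
    regularizedHGFun a b 0 = (b.map Gamma).prod⁻¹ := by
  rw [regularizedHGFun_eq_tsum, tsum_eq_single 0 fun n hn => by simp [hn]]
  simp [regularizedHGFunCoeff]

theorem add_one_mul_regularizedHGFunCoeff_add_one (a b : Multiset ℂ) (n : ℕ) :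
    (n + 1) * regularizedHGFunCoeff a b (n + 1) =
      a.prod * regularizedHGFunCoeff (a.map (· + 1)) (b.map (· + 1)) n := by
  have hb (s : ℂ) : s + 1 + n = s + (n + 1 : ℕ) := by push_cast; ring
  simp only [regularizedHGFunCoeff, ascPochhammer_succ_left, Polynomial.eval_mul,
    Polynomial.eval_X, Polynomial.eval_comp, Polynomial.eval_add, Polynomial.eval_one,
    Multiset.prod_map_mul, Multiset.map_map, Function.comp_apply, Multiset.map_id', hb,
    Nat.factorial_succ]
  push_cast
  field_simp

theorem hasDerivAt_regularizedHGFun {a b : Multiset ℂ} {w : ℂ}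
    (hw : w ∈ Metric.eball 0 (regularizedHGFunSeries a b).radius) :
    HasDerivAt (regularizedHGFun a b)
      (a.prod * regularizedHGFun (a.map (· + 1)) (b.map (· + 1)) w) w := by
  have hf : HasFPowerSeriesOnBall (regularizedHGFun a b) (regularizedHGFunSeries a b) 0
      (regularizedHGFunSeries a b).radius :=
    (regularizedHGFunSeries a b).hasFPowerSeriesOnBall (pos_of_gt hw)
  have hterm (n : ℕ) :
      w ^ n • (n + 1) • (regularizedHGFunSeries a b).coeff (n + 1) =
        a.prod * (w ^ n * regularizedHGFunCoeff (a.map (· + 1)) (b.map (· + 1)) n) := by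
    rw [mul_left_comm, ← add_one_mul_regularizedHGFunCoeff_add_one]
    simp
  have hderiv : deriv (regularizedHGFun a b) w =
      a.prod * regularizedHGFun (a.map (· + 1)) (b.map (· + 1)) w := by
    have h := (hasSum_deriv_of_hasFPowerSeriesOnBall hf hw).tsum_eq
    simp only [hterm, tsum_mul_left, ← regularizedHGFun_eq_tsum, zero_add] at h
    exact h.symm
  have hdiff : DifferentiableAt ℂ (regularizedHGFun a b) w :=
    hf.differentiableOn.differentiableAt (Metric.isOpen_eball.mem_nhds hw)
  exact hderiv ▸ hdiff.hasDerivAt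

theorem mem_eball_radius_regularizedHGFunSeries {a b : Multiset ℂ} (h : a.card ≤ b.card) (w : ℂ) :
    w ∈ Metric.eball 0 (regularizedHGFunSeries a b).radius := by
  rw [radius_regularizedHGFunSeries_eq_top h]
  simp

theorem hasSum_regularizedHGFun {a b : Multiset ℂ} (h : a.card ≤ b.card) (w : ℂ) :
    HasSum (fun n : ℕ => w ^ n * regularizedHGFunCoeff a b n) (regularizedHGFun a b w) := by
  simpa using! (regularizedHGFunSeries a b).hasSum (mem_eball_radius_regularizedHGFunSeries h w)

theorem hasDerivAt_regularizedHGFun_zero_singleton (s w : ℂ) :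
    HasDerivAt (regularizedHGFun 0 {s}) (regularizedHGFun 0 {s + 1} w) w := by
  simpa using hasDerivAt_regularizedHGFun (a := 0) (b := {s})
    (mem_eball_radius_regularizedHGFunSeries (by simp) w)

theorem regularizedHGFunCoeff_zero_singleton (s : ℂ) (n : ℕ) :
    regularizedHGFunCoeff 0 {s} n = (Gamma (s + n))⁻¹ / n.factorial := by
  rw [div_eq_inv_mul]
  simp [regularizedHGFunCoeff, mul_comm]

theorem regularizedHGFunCoeff_zero_singleton_eq_mul (s : ℂ) (n : ℕ) :
    regularizedHGFunCoeff 0 {s} n = (s + n) * regularizedHGFunCoeff 0 {s + 1} n := by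
  rw [regularizedHGFunCoeff_zero_singleton, regularizedHGFunCoeff_zero_singleton,
    one_div_Gamma_eq_self_mul_one_div_Gamma_add_one, add_right_comm, mul_div_assoc]

theorem regularizedHGFun_zero_singleton_eq_add (s w : ℂ) :
    regularizedHGFun 0 {s} w =
      s * regularizedHGFun 0 {s + 1} w + w * regularizedHGFun 0 {s + 2} w := by
  have hsum (s : ℂ) := hasSum_regularizedHGFun (a := 0) (b := {s}) (by simp) w
  have hsucc (n : ℕ) : w ^ (n + 1) * ((n + 1 : ℕ) * regularizedHGFunCoeff 0 {s + 1} (n + 1)) =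
      w * (w ^ n * regularizedHGFunCoeff 0 {s + 2} n) := by
    have h := add_one_mul_regularizedHGFunCoeff_add_one 0 {s + 1} n
    simp only [Multiset.prod_zero, Multiset.map_zero, Multiset.map_singleton, one_mul, add_assoc,
      one_add_one_eq_two] at h
    rw [Nat.cast_succ, h, pow_succ']
    ring
  have hshift : HasSum (fun n : ℕ => w ^ n * (n * regularizedHGFunCoeff 0 {s + 1} n))
      (w * regularizedHGFun 0 {s + 2} w) := by
    rw [← hasSum_nat_add_iff' 1]
    simpa [← hsucc] using (hsum (s + 2)).mul_left w
  refine (hsum s).unique ((((hsum (s + 1)).mul_left s).add hshift).congr_fun fun n => ?_)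
  rw [regularizedHGFunCoeff_zero_singleton_eq_mul]
  ring

theorem inner_regularizedHGFun_zero_singleton_add_one (s : ℂ) (w : ℝ) :
    inner ℝ (regularizedHGFun 0 {s} w) (regularizedHGFun 0 {s + 1} w) =
      s.re * ‖regularizedHGFun 0 {s + 1} w‖ ^ 2 +
        w * inner ℝ (regularizedHGFun 0 {s + 1} w) (regularizedHGFun 0 {s + 2} w) := by
  rw [regularizedHGFun_zero_singleton_eq_add s w, Complex.sq_norm, normSq_apply]
  simp only [Complex.inner, map_add, map_mul, conj_ofReal, mul_re, mul_im, add_re, add_im, conj_re,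
    conj_im, ofReal_re, ofReal_im]
  ring

theorem monotone_sq_norm_regularizedHGFun_sub_mul_sq_norm {s : ℂ} (hs : 1 / 2 ≤ s.re) :
    Monotone fun w : ℝ =>
      ‖regularizedHGFun 0 {s} w‖ ^ 2 - w * ‖regularizedHGFun 0 {s + 1} w‖ ^ 2 := by
  refine monotone_of_hasDerivAt_nonneg
    (f' := fun w => (2 * s.re - 1) * ‖regularizedHGFun 0 {s + 1} w‖ ^ 2) (fun w => ?_) fun w => ?_
  · have h₀ := (hasDerivAt_regularizedHGFun_zero_singleton s w).comp_ofReal.norm_sq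
    have h₁ := (hasDerivAt_regularizedHGFun_zero_singleton (s + 1) w).comp_ofReal.norm_sq
    refine (h₀.sub ((hasDerivAt_id w).mul h₁)).congr_deriv ?_
    rw [inner_regularizedHGFun_zero_singleton_add_one, add_assoc s, one_add_one_eq_two, id_eq]
    ring
  · exact mul_nonneg (by linarith) (sq_nonneg _)

theorem norm_regularizedHGFun_zero_singleton_le {s : ℂ} (hs : 1 / 2 ≤ s.re) {w : ℝ} (hw : w ≤ 0) :
    ‖regularizedHGFun 0 {s} w‖ ≤ ‖Gamma s‖⁻¹ := by
  refine le_of_pow_le_pow_left₀ two_ne_zero (by positivity) ?_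
  calc ‖regularizedHGFun 0 {s} w‖ ^ 2
      ≤ ‖regularizedHGFun 0 {s} w‖ ^ 2 - w * ‖regularizedHGFun 0 {s + 1} w‖ ^ 2 :=
        le_sub_self_iff _ |>.2 (mul_nonpos_of_nonpos_of_nonneg hw (sq_nonneg _))
    _ ≤ ‖regularizedHGFun 0 {s} (0 : ℝ)‖ ^ 2 - 0 * ‖regularizedHGFun 0 {s + 1} (0 : ℝ)‖ ^ 2 :=
        monotone_sq_norm_regularizedHGFun_sub_mul_sq_norm hs hw
    _ = ‖Gamma s‖⁻¹ ^ 2 := by simp [regularizedHGFun_apply_zero]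

end Hypergeometric

theorem besselJ_eq_cpow_mul_regularizedHGFun (ν : ℂ) {z : ℝ} (hz : z ≠ 0) :
    besselJ ν z =
      ((z : ℂ) / 2) ^ ν * Complex.regularizedHGFun 0 {ν + 1} (-((z : ℂ) / 2) ^ 2) := by
  have hpow (k : ℕ) :
      ((z : ℂ) / 2) ^ (2 * (k : ℂ) + ν) = (((z : ℂ) / 2) ^ 2) ^ k * ((z : ℂ) / 2) ^ ν := by
    rw [Complex.cpow_add _ _ (by simpa : (z : ℂ) / 2 ≠ 0), ← pow_mul]
    norm_cast
  rw [regularizedHGFun_eq_tsum, besselJ, ← tsum_mul_left]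
  refine tsum_congr fun k => ?_
  rw [hpow, Complex.Gamma_nat_eq_factorial, add_right_comm, neg_pow (((z : ℂ) / 2) ^ 2),
    regularizedHGFunCoeff_zero_singleton]
  ring

theorem norm_besselJ_le {ν : ℂ} (hν : -1 / 2 ≤ ν.re) {z : ℝ} (hz : 0 < z) :
    ‖besselJ ν z‖ ≤ (z / 2) ^ ν.re / ‖Complex.Gamma (ν + 1)‖ := by
  have hF := norm_regularizedHGFun_zero_singleton_le (s := ν + 1)
    (by rw [Complex.add_re, Complex.one_re]; linarith) (neg_nonpos.2 (sq_nonneg (z / 2)))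
  have hpow : ‖((z : ℂ) / 2) ^ ν‖ = (z / 2) ^ ν.re := by
    simpa using Complex.norm_cpow_eq_rpow_re_of_pos (half_pos hz) ν
  push_cast at hF
  rw [besselJ_eq_cpow_mul_regularizedHGFun ν hz.ne', norm_mul, hpow, div_eq_mul_inv]
  exact mul_le_mul_of_nonneg_left hF (by positivity)

theorem norm_Skernel (a : ℝ) {x y : ℝ} (hx : 0 ≤ x) (hy : 0 ≤ y) (t : ℝ) :
    ‖Skernel a x y t‖ = (2 * |t|) ^ (-(a + 1) / 2) * (x * y / (2 * |t|)) ^ ((1 - a) / 2) *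
      ‖besselJ (((a - 1) / 2 : ℝ) : ℂ) (x * y / (2 * |t|))‖ := by
  have hexp_neg (r : ℝ) : ‖Complex.exp (-Complex.I * r)‖ = 1 := by
    simpa using Complex.norm_exp_I_mul_ofReal (-r)
  unfold Skernel
  split_ifs <;>
    simp only [norm_mul, hexp_neg, Complex.norm_exp_I_mul_ofReal, Complex.norm_real, one_mul,
      mul_one, Real.norm_of_nonneg (Real.rpow_nonneg (show 0 ≤ 2 * |t| by positivity) _),
      Real.norm_of_nonneg (Real.rpow_nonneg (show 0 ≤ x * y / (2 * |t|) by positivity) _)]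

theorem norm_Skernel_le {a x y t : ℝ} (ha : 0 ≤ a) (hx : 0 < x) (hy : 0 < y) (ht : t ≠ 0) :
    ‖Skernel a x y t‖ ≤ 2 ^ (-a) / Real.Gamma ((a + 1) / 2) * |t| ^ (-(a + 1) / 2) := by
  have ht' : 0 < |t| := abs_pos.2 ht
  set z := x * y / (2 * |t|)
  have hz : 0 < z := by positivity
  have hΓ : 0 < Real.Gamma ((a + 1) / 2) := Real.Gamma_pos_of_pos (by positivity)
  have hJ : ‖besselJ (((a - 1) / 2 : ℝ) : ℂ) z‖ ≤
      (z / 2) ^ ((a - 1) / 2) / Real.Gamma ((a + 1) / 2) := by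
    have h := norm_besselJ_le (ν := ((a - 1) / 2 : ℝ)) (by rw [Complex.ofReal_re]; linarith) hz
    rwa [← Complex.ofReal_one, ← Complex.ofReal_add, Complex.Gamma_ofReal, Complex.norm_real,
      Complex.ofReal_re, show (a - 1) / 2 + 1 = (a + 1) / 2 by ring, Real.norm_of_nonneg hΓ.le] at h
  have hz_pow : z ^ ((1 - a) / 2) * (z / 2) ^ ((a - 1) / 2) = 2 ^ ((1 - a) / 2) := by
    rw [show (a - 1) / 2 = -((1 - a) / 2) by ring, Real.rpow_neg (by positivity),
      ← Real.inv_rpow (by positivity), ← Real.mul_rpow hz.le (by positivity), inv_div,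
      mul_div_cancel₀ _ hz.ne']
  have htwo_pow : (2 : ℝ) ^ (-(a + 1) / 2) * 2 ^ ((1 - a) / 2) = 2 ^ (-a) := by
    rw [← Real.rpow_add two_pos]
    ring_nf
  calc ‖Skernel a x y t‖
      = (2 * |t|) ^ (-(a + 1) / 2) * z ^ ((1 - a) / 2) * ‖besselJ (((a - 1) / 2 : ℝ) : ℂ) z‖ :=
        norm_Skernel a hx.le hy.le t
    _ ≤ (2 * |t|) ^ (-(a + 1) / 2) * z ^ ((1 - a) / 2) *
          ((z / 2) ^ ((a - 1) / 2) / Real.Gamma ((a + 1) / 2)) := by gcongr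
    _ = 2 ^ (-(a + 1) / 2) * (z ^ ((1 - a) / 2) * (z / 2) ^ ((a - 1) / 2)) /
          Real.Gamma ((a + 1) / 2) * |t| ^ (-(a + 1) / 2) := by
        rw [Real.mul_rpow zero_le_two ht'.le]
        ring
    _ = 2 ^ (-a) / Real.Gamma ((a + 1) / 2) * |t| ^ (-(a + 1) / 2) := by rw [hz_pow, htwo_pow]

/-- For `a ≥ 0`, the kernel satisfies `|S_a(x,y,t)| ≤ C(a)|t|^{-(a+1)/2}`. -/
theorem kernel_dispersive_bound (a : ℝ) (ha : 0 ≤ a) :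
    ∃ C > (0:ℝ), ∀ x > (0:ℝ), ∀ y > (0:ℝ), ∀ t : ℝ, t ≠ 0 →
      ‖Skernel a x y t‖ ≤ C * |t| ^ (-(a + 1) / 2) :=
  ⟨2 ^ (-a) / Real.Gamma ((a + 1) / 2),
    div_pos (Real.rpow_pos_of_pos two_pos _) (Real.Gamma_pos_of_pos (by positivity)),
    fun _ hx _ hy _ ht => norm_Skernel_le ha hx hy ht⟩
end
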